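/- Let G be a finite group acting faithfully and primitively on a finite set Ω with base size b(G) = 2, and suppose the socle of G — the subgroup generated by all minimal normal subgroups of G — is non-abelian. Then G is not an IBIS group on Ω. -/

import Mathlib

/-- The pointwise stabiliser of a tuple (list) of points of `Ω` in `G`. -/
def listStabilizer (G : Type*) {Ω : Type*} [Group G] [MulAction G Ω] (l : List Ω) : Subgroup G :=
  ⨅ ω ∈ l, MulAction.stabilizer G ω

/-- A tuple is a base for `G` if its pointwise stabiliser is trivial. -/
def IsBaseTuple (G : Type*) {Ω : Type*} [Group G] [MulAction G Ω] (l : List Ω) : Prop :=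
  listStabilizer G l = ⊥

/-- A tuple is irredundant if, for each `i`, the pointwise stabiliser of the first `i`
entries does not fix the `(i+1)`-st entry. -/
def IsIrredundantTuple (G : Type*) {Ω : Type*} [Group G] [MulAction G Ω] (l : List Ω) : Prop :=
  ∀ i : Fin l.length, ∃ g ∈ listStabilizer G (l.take i), g • l.get i ≠ l.get i

/-- The base size of `G` on `Ω`: the minimal length of a base. -/
noncomputable def baseSize (G Ω : Type*) [Group G] [MulAction G Ω] : ℕ :=
  sInf {n | ∃ l : List Ω, l.length = n ∧ IsBaseTuple G l}

/-- `G` is an IBIS group on `Ω` if all irredundant bases have the same length. -/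
def IsIBIS (G Ω : Type*) [Group G] [MulAction G Ω] : Prop :=
  ∀ l₁ l₂ : List Ω, IsBaseTuple G l₁ → IsIrredundantTuple G l₁ →
    IsBaseTuple G l₂ → IsIrredundantTuple G l₂ → l₁.length = l₂.length

/-- A normal subgroup is minimal normal if it is nontrivial and contains no normal subgroup
of `G` other than itself and the trivial subgroup. -/
def IsMinimalNormal {G : Type*} [Group G] (N : Subgroup G) : Prop :=
  N.Normal ∧ N ≠ ⊥ ∧ ∀ M : Subgroup G, M.Normal → M ≤ N → M = ⊥ ∨ M = N

/-- The socle of a group: the subgroup generated by all its minimal normal subgroups. -/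
def socle (G : Type*) [Group G] : Subgroup G :=
  ⨆ N ∈ {N : Subgroup G | IsMinimalNormal N}, N

/-- An action is primitive if it is transitive and every block is trivial. -/
def IsPrimitiveAction (G Ω : Type*) [Group G] [MulAction G Ω] : Prop :=
  MulAction.IsPretransitive G Ω ∧
    ∀ B : Set Ω, MulAction.IsBlock G B → B.Subsingleton ∨ B = Set.univ

/-!
Suppose that `G` is IBIS. Since some irredundant base has length 2, so has every irredundant base;
by primitivity the stabilisers of distinct points are distinct, so any two distinct points form an
irredundant tuple, which extends to an irredundant base and hence is one already. Thus a nontrivial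
element fixes at most one point, and a point stabiliser `H ≠ 1` is a Frobenius complement.

Frobenius' theorem gives a normal complement `K` of `H`: a class function of `H` extends to `G` by
making it constant on the set of elements without nontrivial conjugates in `H`. If the character of
an irreducible representation of `G` does not sum to zero over this set, comparing norms shows that
it is an integer multiple of such an extension. Hence it is constant on the set, so that in every
irreducible representation the sum of the elements of the set squares to a multiple of itself, and
the set is closed under multiplication.

Since `H` acts on `K` without fixed points, it normalises a nontrivial Sylow subgroup of `K`. By
maximality of `H`, this Sylow subgroup is normal in `G` and equal to `K`, which is therefore a
self-centralising abelian minimal normal subgroup containing the socle.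
-/

open MonoidAlgebra Representation

section ClassFunctions

variable {G α : Type*} [Group G]

/-- A function on a group which is constant on conjugacy classes. -/
def IsClassFunction (f : G → α) : Prop :=
  ∀ ⦃a b : G⦄, IsConj a b → f a = f b

theorem isConj_inv_inv {a b : G} (h : IsConj a b) : IsConj a⁻¹ b⁻¹ := by
  obtain ⟨c, rfl⟩ := isConj_iff.mp h
  exact isConj_iff.mpr ⟨c, by group⟩

theorem IsClassFunction.comp_inv {f : G → α} (hf : IsClassFunction f) :
    IsClassFunction fun g ↦ f g⁻¹ :=
  fun _ _ hab ↦ hf (isConj_inv_inv hab)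

theorem isClassFunction_character {k V : Type*} [Field k] [AddCommGroup V] [Module k V]
    (ρ : Representation k G V) : IsClassFunction ρ.character := by
  intro a b hab
  obtain ⟨x, rfl⟩ := isConj_iff.mp hab
  exact (char_conj ρ a x).symm

end ClassFunctions

section FormalSum

variable {k G : Type*} [Semiring k] [Fintype G]

/-- The element `∑ f(g) g` of the group algebra with coefficient function `f`. -/
noncomputable def formalSum (f : G → k) : k[G] := ∑ g, single g (f g)

theorem coeff_formalSum (f : G → k) (g : G) : (formalSum f).coeff g = f g := by
  classical
  simp [formalSum, Finsupp.single_apply]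

variable [Group G]

theorem coeff_formalSum_mul_formalSum (f f' : G → k) (x : G) :
    (formalSum f * formalSum f').coeff x = ∑ g, f g * f' (g⁻¹ * x) := by
  rw [formalSum, Finset.sum_mul]
  simp [coeff_single_mul_apply, coeff_formalSum]

theorem mul_mem_of_formalSum_mul_self [CharZero k] {s : Set G} {c : k}
    (hs : formalSum (s.indicator (1 : G → k)) * formalSum (s.indicator 1) =
      c • formalSum (s.indicator 1)) {a b : G} (ha : a ∈ s) (hb : b ∈ s) : a * b ∈ s := by
  classical
  have hcoeff := congr(($hs).coeff (a * b))
  rw [coeff_formalSum_mul_formalSum, coeff_smul, Finsupp.smul_apply, coeff_formalSum] at hcoeff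
  have hcount : ∑ g, s.indicator (1 : G → k) g * s.indicator 1 (g⁻¹ * (a * b)) =
      (Finset.univ.filter fun g ↦ g ∈ s ∧ g⁻¹ * (a * b) ∈ s).card := by
    simp [Set.indicator_apply, ← ite_and, and_comm]
  by_contra hab
  rw [hcount, Set.indicator_of_notMem hab, smul_zero, Nat.cast_eq_zero, Finset.card_eq_zero]
    at hcoeff
  exact Finset.notMem_empty a (hcoeff ▸ by simp [ha, hb])

theorem IsClassFunction.commute_formalSum {f : G → k} (hf : IsClassFunction f) (g : G) :
    Commute (formalSum f) (of k G g) := by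
  ext x
  have hconj : f (x * g⁻¹) = f (g⁻¹ * x) := hf (isConj_iff.mpr ⟨g⁻¹, by group⟩)
  simpa [coeff_formalSum, coeff_single_mul_apply, coeff_mul_single_apply] using hconj

theorem trace_asAlgebraHom_formalSum {k V : Type*} [Field k] [AddCommGroup V] [Module k V]
    (ρ : Representation k G V) (f : G → k) :
    LinearMap.trace k V (ρ.asAlgebraHom (formalSum f)) = ∑ g, f g * ρ.character g := by
  simp [formalSum, character]

end FormalSum

section GroupAlgebra

universe u v

variable {k : Type u} {G : Type v} [Field k] [Group G]

section OfModule

variable (M : Type*) [AddCommGroup M] [Module k M] [Module k[G] M] [IsScalarTower k k[G] M]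

theorem asAlgebraHom_ofModule'_apply (z : k[G]) (x : M) :
    (ofModule' (k := k) (G := G) M).asAlgebraHom z x = z • x := by
  simp [ofModule', asAlgebraHom]

theorem isIrreducible_ofModule' [IsSimpleModule k[G] M] :
    (ofModule' (k := k) (G := G) M).IsIrreducible := by
  rw [irreducible_iff_isSimpleModule_asModule]
  let e : (ofModule' (k := k) (G := G) M).asModule ≃ₗ[k[G]] M :=
    { asModuleEquiv _ with map_smul' := fun z x ↦ asAlgebraHom_ofModule'_apply M z x }
  exact IsSimpleModule.congr e

end OfModule

theorem groupAlgebra_eq_zero_of_forall_isIrreducible [Finite G] [NeZero (Nat.card G : k)] {z : k[G]}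
    (hz : ∀ (V : Type max u v) [AddCommGroup V] [Module k V] [FiniteDimensional k V]
      (ρ : Representation k G V) [ρ.IsIrreducible], ρ.asAlgebraHom z = 0) : z = 0 := by
  have mem_of_isCoatom (m : Submodule k[G] k[G]) (hm : IsCoatom m) : z ∈ m := by
    have : IsSimpleModule k[G] (k[G] ⧸ m) := isSimpleModule_iff_isCoatom.mpr hm
    have : FiniteDimensional k (k[G] ⧸ m) := Module.Finite.trans k[G] _
    have := isIrreducible_ofModule' (k := k) (G := G) (k[G] ⧸ m)
    have hz_one : z • (Submodule.Quotient.mk 1 : k[G] ⧸ m) = 0 := by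
      rw [← asAlgebraHom_ofModule'_apply, hz, LinearMap.zero_apply]
    rwa [← Submodule.Quotient.mk_smul, smul_eq_mul, mul_one,
      Submodule.Quotient.mk_eq_zero] at hz_one
  have hjac : z ∈ Module.jacobson k[G] k[G] := Submodule.mem_sInf.mpr mem_of_isCoatom
  rwa [IsSemisimpleModule.jacobson_eq_bot, Submodule.mem_bot] at hjac

theorem exists_asAlgebraHom_eq_algebraMap [IsAlgClosed k] {V : Type*} [AddCommGroup V] [Module k V]
    [FiniteDimensional k V] (ρ : Representation k G V) [ρ.IsIrreducible] {z : k[G]}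
    (hz : ∀ g : G, Commute z (of k G g)) :
    ∃ c : k, ρ.asAlgebraHom z = algebraMap k (Module.End k V) c := by
  have hcomm (g : G) (v : V) : ρ.asAlgebraHom z (ρ g v) = ρ g (ρ.asAlgebraHom z v) := by
    have := congr($((hz g).map ρ.asAlgebraHom) v)
    rwa [asAlgebraHom_of] at this
  obtain ⟨c, hc⟩ :=
    (Representation.IsIrreducible.algebraMap_intertwiningMap_bijective_of_isAlgClosed (ρ := ρ)).2
    ((ρ.asAlgebraHom z).intertwiningMap_of_isIntertwiningMap ρ ρ hcomm)
  exact ⟨c, LinearMap.ext fun v ↦ congr($hc v).symm⟩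

theorem trace_algebraMap_end {V : Type*} [AddCommGroup V] [Module k V] [FiniteDimensional k V]
    (c : k) : LinearMap.trace k V (algebraMap k (Module.End k V) c) = c * Module.finrank k V := by
  simp [Algebra.algebraMap_eq_smul_one]

theorem finrank_ne_zero_of_isIrreducible [CharZero k] {V : Type*} [AddCommGroup V] [Module k V]
    [FiniteDimensional k V] (ρ : Representation k G V) [ρ.IsIrreducible] :
    (Module.finrank k V : k) ≠ 0 := by
  have : Nontrivial V := IsSimpleModule.nontrivial k[G] ρ.asModule
  exact_mod_cast Module.finrank_pos.ne'

variable [Fintype G]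

theorem IsClassFunction.asAlgebraHom_formalSum [IsAlgClosed k] [CharZero k] {V : Type*}
    [AddCommGroup V] [Module k V] [FiniteDimensional k V] (ρ : Representation k G V)
    [ρ.IsIrreducible] {f : G → k} (hf : IsClassFunction f) :
    ρ.asAlgebraHom (formalSum f) =
      algebraMap k (Module.End k V) ((∑ g, f g * ρ.character g) / Module.finrank k V) := by
  obtain ⟨c, hc⟩ := exists_asAlgebraHom_eq_algebraMap ρ hf.commute_formalSum
  rw [hc, ← trace_asAlgebraHom_formalSum, hc, trace_algebraMap_end,
    mul_div_cancel_right₀ _ (finrank_ne_zero_of_isIrreducible ρ)]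

theorem IsClassFunction.eq_zero_of_forall_sum_character_inv [IsAlgClosed k] [CharZero k]
    {f : G → k} (hf : IsClassFunction f)
    (horth : ∀ (V : Type max u v) [AddCommGroup V] [Module k V] [FiniteDimensional k V]
      (ρ : Representation k G V) [ρ.IsIrreducible], ∑ g, f g * ρ.character g⁻¹ = 0) : f = 0 := by
  have hsum : formalSum (fun g ↦ f g⁻¹) = 0 :=
    groupAlgebra_eq_zero_of_forall_isIrreducible fun V _ _ _ ρ _ ↦ by
      rw [hf.comp_inv.asAlgebraHom_formalSum ρ, ← Equiv.sum_comp (Equiv.inv G)]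
      simp [horth V ρ]
  funext g
  simpa [coeff_formalSum] using congr(($hsum).coeff g⁻¹)

end GroupAlgebra

section ComplexCharacters

variable {G V : Type*} [Group G] [AddCommGroup V] [Module ℂ V] [FiniteDimensional ℂ V]

open scoped Matrix ComplexOrder in
theorem exists_posDef_forall_conjTranspose_mul_mul_eq [Finite G] {n : Type*} [Fintype n]
    [DecidableEq n] (M : G →* Matrix n n ℂ) :
    ∃ A : Matrix n n ℂ, A.PosDef ∧ ∀ g, (M g)ᴴ * A * M g = A := by
  classical
  have := Fintype.ofFinite G
  refine ⟨∑ x, (M x)ᴴ * M x, ?_, fun g ↦ ?_⟩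
  · rw [← Finset.add_sum_erase _ _ (Finset.mem_univ 1), map_one]
    refine .add_posSemidef (by simpa using Matrix.PosDef.one) ?_
    exact Matrix.posSemidef_sum _ fun x _ ↦ Matrix.posSemidef_conjTranspose_mul_self _
  · rw [Finset.mul_sum, Finset.sum_mul]
    exact Fintype.sum_equiv (Equiv.mulRight g) _ _ fun x ↦ by simp [Matrix.mul_assoc]

open scoped Matrix ComplexOrder in
theorem character_inv_eq_star [Finite G] (ρ : Representation ℂ G V) (g : G) :
    ρ.character g⁻¹ = star (ρ.character g) := by
  let b := Module.finBasis ℂ V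
  let M : G →* Matrix _ _ ℂ := (LinearMap.toMatrixAlgEquiv b).toMonoidHom.comp ρ
  have htrace (x : G) : ρ.character x = (M x).trace := LinearMap.trace_eq_matrix_trace ℂ b _
  obtain ⟨A, hA, hinv⟩ := exists_posDef_forall_conjTranspose_mul_mul_eq M
  have hdet : IsUnit A.det := (Matrix.isUnit_iff_isUnit_det A).mp hA.isUnit
  have hMg : M g⁻¹ = A⁻¹ * ((M g)ᴴ * A) := by
    have : (M g)ᴴ * A = A * M g⁻¹ := by
      rw [← hinv g, Matrix.mul_assoc _ (M g), ← map_mul, mul_inv_cancel, map_one, Matrix.mul_one,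
        hinv]
    rw [this, Matrix.nonsing_inv_mul_cancel_left _ _ hdet]
  rw [htrace, htrace, hMg, Matrix.trace_mul_comm, Matrix.mul_nonsing_inv_cancel_right _ _ hdet,
    Matrix.trace_conjTranspose]

theorem sum_character_mul_character_inv [Fintype G] (ρ : Representation ℂ G V) [ρ.IsIrreducible] :
    ∑ g, ρ.character g * ρ.character g⁻¹ = Nat.card G := by
  have hG : (Nat.card G : ℂ) ≠ 0 := by exact_mod_cast Nat.card_pos.ne'
  have := invertibleOfNonzero hG
  have := char_orthonormal ρ ρ
  rw [if_pos ⟨.refl _⟩] at this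
  field_simp at this
  exact_mod_cast this

theorem exists_sum_character [Fintype G] (ρ : Representation ℂ G V) :
    ∃ n : ℕ, ∑ g, ρ.character g = Nat.card G * n := by
  have hG : (Nat.card G : ℂ) ≠ 0 := by exact_mod_cast Nat.card_pos.ne'
  have := invertibleOfNonzero hG
  exact ⟨_, by rw [← card_inv_mul_sum_char_eq_finrank ρ, mul_inv_cancel_left₀ hG]⟩

theorem exists_sum_character_mul_character_inv [Fintype G] {W : Type*} [AddCommGroup W]
    [Module ℂ W] [FiniteDimensional ℂ W] (ρ : Representation ℂ G V) (σ : Representation ℂ G W) :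
    ∃ n : ℕ, ∑ g, ρ.character g * σ.character g⁻¹ = Nat.card G * n := by
  have hG : (Nat.card G : ℂ) ≠ 0 := by exact_mod_cast Nat.card_pos.ne'
  have := invertibleOfNonzero hG
  exact ⟨_, by rw [← card_inv_mul_sum_char_mul_char_eq_finrank σ ρ, mul_inv_cancel_left₀ hG]⟩

open scoped ComplexOrder in
theorem eq_smul_of_dotProduct_star_eq {ι : Type*} [Fintype ι] {u v : ι → ℂ} {N : ℝ} (hN : 0 ≤ N)
    {c : ℤ} (hc : c ≠ 0) (hu : u ⬝ᵥ star u = N) (hv : v ⬝ᵥ star v = N) (huv : u ⬝ᵥ star v = N * c) :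
    u = (c : ℂ) • v := by
  have hvu : v ⬝ᵥ star u = N * c := by simp [Matrix.dotProduct_star v, huv]
  have hnorm : (u - (c : ℂ) • v) ⬝ᵥ star (u - (c : ℂ) • v) = ((N * (1 - c ^ 2) : ℝ) : ℂ) := by
    simp only [star_sub, star_smul, star_intCast, dotProduct_sub, sub_dotProduct, hu,
      smul_dotProduct, hvu, smul_eq_mul, dotProduct_smul, huv, hv, Complex.ofReal_mul,
      Complex.ofReal_sub, Complex.ofReal_one, Complex.ofReal_pow, Complex.ofReal_intCast]
    ring
  have hnonpos : N * (1 - (c : ℝ) ^ 2) ≤ 0 := by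
    have : (1 : ℝ) ≤ (c : ℝ) ^ 2 := by
      exact_mod_cast (one_le_sq_iff_one_le_abs c).mpr (Int.one_le_abs hc)
    nlinarith
  have hzero : (u - (c : ℂ) • v) ⬝ᵥ star (u - (c : ℂ) • v) = 0 := by
    refine le_antisymm ?_ (dotProduct_self_star_nonneg _)
    rw [hnorm]
    exact_mod_cast hnonpos
  exact sub_eq_zero.mp (dotProduct_self_star_eq_zero.mp hzero)

end ComplexCharacters

section Malnormal

variable {G : Type*} [Group G] {H : Subgroup G}

/-- A subgroup `H` which meets each of its conjugates by elements outside `H` trivially. In a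
finite group, the nontrivial proper malnormal subgroups are the Frobenius complements. -/
def IsMalnormal (H : Subgroup G) : Prop :=
  ∀ ⦃g x : G⦄, x ∈ H → g * x * g⁻¹ ∈ H → x ≠ 1 → g ∈ H

/-- The identity together with the elements of `G` lying in no conjugate of `H`. -/
def frobeniusKernelSet (H : Subgroup G) : Set G :=
  {g | ∀ h ∈ H, IsConj g h → h = 1}

theorem one_mem_frobeniusKernelSet : 1 ∈ frobeniusKernelSet H :=
  fun _ _ h ↦ isConj_one_right.mp h

theorem mem_frobeniusKernelSet_of_isConj {a b : G} (hab : IsConj a b)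
    (ha : a ∈ frobeniusKernelSet H) : b ∈ frobeniusKernelSet H :=
  fun h hh hbh ↦ ha h hh (hab.trans hbh)

theorem inv_mem_frobeniusKernelSet {g : G} (hg : g ∈ frobeniusKernelSet H) :
    g⁻¹ ∈ frobeniusKernelSet H := fun h hh hgh ↦
  inv_eq_one.mp (hg h⁻¹ (H.inv_mem hh) (by simpa using isConj_inv_inv hgh))

theorem IsMalnormal.isConj_of_isConj_coe (hH : IsMalnormal H) {a b : H}
    (hab : IsConj (a : G) (b : G)) : IsConj a b := by
  obtain ⟨c, hc⟩ := isConj_iff.mp hab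
  by_cases ha : (a : G) = 1
  · obtain rfl : a = b := Subtype.ext (by rw [← hc, ha]; group)
    exact IsConj.refl a
  · have hcH : c ∈ H := hH a.2 (hc ▸ b.2) ha
    exact isConj_iff.mpr ⟨⟨c, hcH⟩, Subtype.ext hc⟩

theorem IsMalnormal.card_conj_mem (hH : IsMalnormal H) {g : G} (hg : g ∉ frobeniusKernelSet H) :
    Nat.card {x : G // x * g * x⁻¹ ∈ H} = Nat.card H := by
  obtain ⟨h, hh, hgh, hh1⟩ : ∃ h ∈ H, IsConj g h ∧ h ≠ 1 := by
    simpa [frobeniusKernelSet] using hg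
  obtain ⟨y, rfl⟩ := isConj_iff.mp hgh
  refine Nat.card_congr ((Equiv.mulRight y⁻¹).subtypeEquiv fun x ↦ ?_)
  have hconj : x * g * x⁻¹ = (x * y⁻¹) * (y * g * y⁻¹) * (x * y⁻¹)⁻¹ := by group
  rw [hconj]
  exact ⟨fun hx ↦ hH hh hx hh1, fun hx ↦ H.mul_mem (H.mul_mem hx hh) (H.inv_mem hx)⟩

open scoped Classical in
theorem IsMalnormal.sum_conj_mem [Fintype G] (hH : IsMalnormal H) {A : Type*} [AddCommMonoid A]
    (a : A) (g : G) :
    ∑ x : G, (if x * g * x⁻¹ ∈ H ∧ x * g * x⁻¹ ≠ 1 then a else 0) =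
      if g ∈ frobeniusKernelSet H then 0 else Nat.card H • a := by
  split_ifs with hg
  · refine Finset.sum_eq_zero fun x _ ↦ if_neg fun ⟨hxH, hx1⟩ ↦ ?_
    exact hx1 (hg _ hxH (isConj_iff.mpr ⟨x, rfl⟩))
  · have hg1 : g ≠ 1 := fun h ↦ hg (by rw [h]; exact one_mem_frobeniusKernelSet)
    rw [← hH.card_conj_mem hg, Nat.card_eq_fintype_card, Fintype.card_subtype]
    simp [hg1, ← Finset.sum_filter]

open scoped Classical in
theorem IsMalnormal.card_smul_sum_ne_one [Fintype G] (hH : IsMalnormal H) {A : Type*}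
    [AddCommMonoid A] {F : G → A} (hF : IsClassFunction F) :
    Nat.card G • ∑ g with g ∈ H ∧ g ≠ 1, F g =
      Nat.card H • ∑ g with g ∉ frobeniusKernelSet H, F g :=
  calc Nat.card G • ∑ g with g ∈ H ∧ g ≠ 1, F g
      = ∑ x : G, ∑ g, if g ∈ H ∧ g ≠ 1 then F g else 0 := by
        simp [Finset.sum_filter]
    _ = ∑ x : G, ∑ g, if x * g * x⁻¹ ∈ H ∧ x * g * x⁻¹ ≠ 1 then F g else 0 := by
        refine Finset.sum_congr rfl fun x _ ↦ ?_
        rw [← Equiv.sum_comp (MulAut.conj x).toEquiv]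
        refine Finset.sum_congr rfl fun g _ ↦ ?_
        rw [hF (isConj_iff.mpr ⟨x, rfl⟩ : IsConj g (x * g * x⁻¹))]
        rfl
    _ = ∑ g, if g ∈ frobeniusKernelSet H then 0 else Nat.card H • F g := by
        rw [Finset.sum_comm]
        exact Finset.sum_congr rfl fun g _ ↦ hH.sum_conj_mem (F g) g
    _ = Nat.card H • ∑ g with g ∉ frobeniusKernelSet H, F g := by
        simp [Finset.smul_sum, Finset.sum_filter, ite_not]

open scoped Classical in
theorem IsMalnormal.sum_eq [Fintype G] (hH : IsMalnormal H) {k : Type*} [Field k] [CharZero k]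
    {F : G → k} (hF : IsClassFunction F) :
    ∑ g, F g = ∑ g with g ∈ frobeniusKernelSet H, F g + H.index * (∑ h : H, F h - F 1) := by
  have hcard : (Nat.card H : k) ≠ 0 := by exact_mod_cast Nat.card_pos.ne'
  have hsum := hH.card_smul_sum_ne_one hF
  have hne : ∑ g with g ∈ H ∧ g ≠ 1, F g = ∑ h : H, F h - F 1 := by
    rw [← Finset.filter_filter, Finset.filter_ne', Finset.sum_erase_eq_sub (by simp [H.one_mem])]
    congr 1
    exact Finset.sum_subtype _ (by simp) F
  rw [hne, ← H.index_mul_card, nsmul_eq_mul, nsmul_eq_mul, Nat.cast_mul, mul_right_comm,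
    mul_comm (Nat.card H : k)] at hsum
  rw [mul_right_cancel₀ hcard hsum, Finset.sum_filter_add_sum_filter_not]

theorem IsMalnormal.card_frobeniusKernelSet [Finite G] (hH : IsMalnormal H) :
    Nat.card (frobeniusKernelSet H) = H.index := by
  classical
  have := Fintype.ofFinite G
  have hsum := hH.sum_eq (F := fun _ ↦ (1 : ℚ)) fun _ _ _ ↦ rfl
  have hK : Nat.card (frobeniusKernelSet H) =
      (Finset.univ.filter (· ∈ frobeniusKernelSet H)).card :=
    Nat.subtype_card _ (by simp)
  have hG : (Nat.card G : ℚ) = H.index * Nat.card H := by exact_mod_cast H.index_mul_card.symm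
  simp only [Finset.sum_const, Finset.card_univ, nsmul_eq_mul, mul_one, ← hK,
    ← Nat.card_eq_fintype_card, hG] at hsum
  have : (Nat.card (frobeniusKernelSet H) : ℚ) = H.index := by linarith
  exact_mod_cast this

open scoped Classical in
/-- An element of `H` conjugate to `g`, or `1` if there is none. For malnormal `H` it is unique up
to conjugacy in `H`, and composing a class function of `H` with `conjInto H` extends it to `G`. -/
noncomputable def conjInto (H : Subgroup G) (g : G) : H :=
  if hg : ∃ h : H, IsConj g h then hg.choose else 1

theorem conjInto_eq_one {g : G} (hg : g ∈ frobeniusKernelSet H) : conjInto H g = 1 := by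
  unfold conjInto
  split_ifs with h
  · exact Subtype.ext (hg _ h.choose.2 h.choose_spec)
  · rfl

theorem IsMalnormal.isConj_conjInto_of_isConj (hH : IsMalnormal H) {g : G} {h : H}
    (hgh : IsConj g h) : IsConj (conjInto H g) h := by
  have hg : ∃ h : H, IsConj g h := ⟨h, hgh⟩
  rw [conjInto, dif_pos hg]
  exact hH.isConj_of_isConj_coe (hg.choose_spec.symm.trans hgh)

theorem isConj_conjInto_or_mem_frobeniusKernelSet (g : G) :
    IsConj g (conjInto H g) ∨ g ∈ frobeniusKernelSet H := by
  unfold conjInto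
  split_ifs with hg
  · exact .inl hg.choose_spec
  · exact .inr fun h hh hgh ↦ absurd ⟨⟨h, hh⟩, hgh⟩ hg

variable {α : Type*} {f : H → α}

theorem IsMalnormal.isClassFunction_comp_conjInto (hH : IsMalnormal H) (hf : IsClassFunction f) :
    IsClassFunction fun g ↦ f (conjInto H g) := by
  intro a b hab
  rcases isConj_conjInto_or_mem_frobeniusKernelSet (H := H) b with hb | hb
  · exact hf (hH.isConj_conjInto_of_isConj (hab.trans hb))
  · simp only [conjInto_eq_one hb,
      conjInto_eq_one (mem_frobeniusKernelSet_of_isConj hab.symm hb)]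

theorem IsMalnormal.comp_conjInto_coe (hH : IsMalnormal H) (hf : IsClassFunction f) (h : H) :
    f (conjInto H (h : G)) = f h :=
  hf (hH.isConj_conjInto_of_isConj (IsConj.refl _))

theorem IsMalnormal.comp_conjInto_inv (hH : IsMalnormal H) (hf : IsClassFunction f) (g : G) :
    f (conjInto H g⁻¹) = f (conjInto H g)⁻¹ := by
  rcases isConj_conjInto_or_mem_frobeniusKernelSet (H := H) g with hg | hg
  · exact hf (hH.isConj_conjInto_of_isConj (by simpa using isConj_inv_inv hg))
  · rw [conjInto_eq_one hg, conjInto_eq_one (inv_mem_frobeniusKernelSet hg), inv_one]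

end Malnormal

section FrobeniusTheorem

variable {G : Type*} [Group G] {H : Subgroup G}

open scoped Classical in
theorem IsMalnormal.sum_mul_comp_conjInto_inv [Fintype G] (hH : IsMalnormal H) {k : Type*} [Field k]
    [CharZero k] {ψ : G → k} (hψ : IsClassFunction ψ) {χ : H → k} (hχ : IsClassFunction χ) :
    ∑ g, ψ g * χ (conjInto H g⁻¹) = (∑ g with g ∈ frobeniusKernelSet H, ψ g) * χ 1 +
      H.index * (∑ h : H, ψ h * χ h⁻¹ - ψ 1 * χ 1) := by
  have hF : IsClassFunction fun g ↦ ψ g * χ (conjInto H g⁻¹) := fun a b hab ↦ by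
    simp only [hψ hab, (hH.isClassFunction_comp_conjInto hχ).comp_inv hab]
  have hK : ∑ g with g ∈ frobeniusKernelSet H, ψ g * χ (conjInto H g⁻¹) =
      (∑ g with g ∈ frobeniusKernelSet H, ψ g) * χ 1 := by
    rw [Finset.sum_mul]
    refine Finset.sum_congr rfl fun g hg ↦ ?_
    rw [conjInto_eq_one (inv_mem_frobeniusKernelSet (Finset.mem_filter.mp hg).2)]
  rw [hH.sum_eq hF, hK, inv_one, conjInto_eq_one one_mem_frobeniusKernelSet]
  congr! 5 with h
  exact hH.comp_conjInto_coe hχ h⁻¹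

open scoped Classical in
theorem IsMalnormal.sum_frobeniusKernelSet_eq_index_mul [Fintype G] (hH : IsMalnormal H)
    {R : Type*} [Semiring R] {F : G → R} {a : R} (hF : ∀ g ∈ frobeniusKernelSet H, F g = a) :
    ∑ g with g ∈ frobeniusKernelSet H, F g = H.index * a := by
  rw [← hH.card_frobeniusKernelSet, Nat.subtype_card _ Finset.mem_filter_univ, ← nsmul_eq_mul,
    ← Finset.sum_const]
  exact Finset.sum_congr rfl fun g hg ↦ hF g (Finset.mem_filter.mp hg).2

open scoped Classical in
theorem IsMalnormal.sum_comp_conjInto_mul_comp_conjInto_inv [Fintype G] (hH : IsMalnormal H)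
    {k : Type*} [Field k] [CharZero k] {χ : H → k} (hχ : IsClassFunction χ) :
    ∑ g, χ (conjInto H g) * χ (conjInto H g⁻¹) = H.index * ∑ h : H, χ h * χ h⁻¹ := by
  rw [hH.sum_mul_comp_conjInto_inv (hH.isClassFunction_comp_conjInto hχ) hχ,
    hH.sum_frobeniusKernelSet_eq_index_mul fun g hg ↦ congrArg χ (conjInto_eq_one hg)]
  simp only [hH.comp_conjInto_coe hχ, conjInto_eq_one one_mem_frobeniusKernelSet]
  ring

variable {V W : Type*} [AddCommGroup V] [Module ℂ V] [FiniteDimensional ℂ V] [AddCommGroup W]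
  [Module ℂ W] [FiniteDimensional ℂ W]

theorem IsMalnormal.exists_int_sum_character_mul_comp_conjInto_inv [Fintype G]
    (hH : IsMalnormal H) (ρ : Representation ℂ G V) (σ : Representation ℂ H W) :
    ∃ c : ℤ, ∑ g, ρ.character g * σ.character (conjInto H g⁻¹) = Nat.card G * c := by
  classical
  obtain ⟨e, he⟩ := exists_sum_character ρ
  obtain ⟨d, hd⟩ := exists_sum_character (ρ.comp H.subtype)
  obtain ⟨m, hm⟩ := exists_sum_character_mul_character_inv (ρ.comp H.subtype) σ
  have hG : (Nat.card G : ℂ) = H.index * Nat.card H := by exact_mod_cast H.index_mul_card.symm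
  have hsum := hH.sum_eq (isClassFunction_character ρ)
  refine ⟨Module.finrank ℂ W * (e - d) + m, ?_⟩
  rw [hH.sum_mul_comp_conjInto_inv (isClassFunction_character ρ) (isClassFunction_character σ)]
  change ∑ h : H, ρ.character h = _ at hd
  change ∑ h : H, ρ.character h * σ.character h⁻¹ = _ at hm
  rw [hd, he, hG] at hsum
  rw [hm, hG, char_one σ]
  push_cast
  linear_combination -(Module.finrank ℂ W : ℂ) * hsum

open scoped Classical in
theorem IsMalnormal.exists_sum_character_mul_comp_conjInto_inv_ne_zero.{u} {G : Type u} [Group G]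
    [Fintype G] {H : Subgroup G} (hH : IsMalnormal H) {ψ : G → ℂ} (hψ : IsClassFunction ψ)
    (hK : ∑ g with g ∈ frobeniusKernelSet H, ψ g ≠ 0) :
    ∃ (W : Type u) (_ : AddCommGroup W) (_ : Module ℂ W) (_ : FiniteDimensional ℂ W)
      (σ : Representation ℂ H W), σ.IsIrreducible ∧
      ∑ g, ψ g * σ.character (conjInto H g⁻¹) ≠ 0 := by
  have hindex : (H.index : ℂ) ≠ 0 := by exact_mod_cast H.index_ne_zero_of_finite
  let a : ℂ := (∑ g with g ∈ frobeniusKernelSet H, ψ g) / H.index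
  -- The pairing of `ψ` with the extension of `χ` is, up to the index, the pairing of `φ` with `χ`.
  let φ : H → ℂ := fun h ↦ ψ h + if h = 1 then a - ψ 1 else 0
  have hφ : IsClassFunction φ := fun x y hxy ↦ by
    have hψxy : ψ x = ψ y := hψ (H.subtype.map_isConj hxy)
    have hone : x = 1 ↔ y = 1 :=
      ⟨fun h ↦ isConj_one_right.mp (h ▸ hxy), fun h ↦ isConj_one_left.mp (h ▸ hxy)⟩
    simp only [φ, hψxy, hone]
  have sum_φ {χ : H → ℂ} (hχ : IsClassFunction χ) :
      ∑ g, ψ g * χ (conjInto H g⁻¹) = H.index * ∑ h, φ h * χ h⁻¹ := by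
    have hφχ : ∑ h, φ h * χ h⁻¹ = ∑ h : H, ψ h * χ h⁻¹ + (a - ψ 1) * χ 1 := by
      simp [φ, add_mul, Finset.sum_add_distrib]
    have ha : ∑ g with g ∈ frobeniusKernelSet H, ψ g = H.index * a := by
      rw [mul_div_cancel₀ _ hindex]
    rw [hH.sum_mul_comp_conjInto_inv hψ hχ, hφχ, ha]
    ring
  by_contra! horth
  have hzero : φ = 0 := hφ.eq_zero_of_forall_sum_character_inv fun W _ _ _ σ hσ ↦ by
    have := horth W _ _ ‹_› σ hσ
    rw [sum_φ (isClassFunction_character σ)] at this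
    exact (mul_eq_zero.mp this).resolve_left hindex
  have ha : a = 0 := by simpa [φ] using congr_fun hzero 1
  exact div_ne_zero hK hindex ha

open scoped Classical in
theorem IsMalnormal.character_eq_character_one_of_sum_ne_zero [Fintype G] (hH : IsMalnormal H)
    (ρ : Representation ℂ G V) [ρ.IsIrreducible]
    (hK : ∑ g with g ∈ frobeniusKernelSet H, ρ.character g ≠ 0) {g : G}
    (hg : g ∈ frobeniusKernelSet H) : ρ.character g = ρ.character 1 := by
  obtain ⟨W, _, _, _, σ, _, hne⟩ := hH.exists_sum_character_mul_comp_conjInto_inv_ne_zero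
    (isClassFunction_character ρ) hK
  obtain ⟨c, hc⟩ := hH.exists_int_sum_character_mul_comp_conjInto_inv ρ σ
  have hc0 : c ≠ 0 := by
    rintro rfl
    simp [hc] at hne
  have hσ := isClassFunction_character σ
  have hG : (Nat.card G : ℂ) = H.index * Nat.card H := by exact_mod_cast H.index_mul_card.symm
  have star_ρ : star ρ.character = fun g ↦ ρ.character g⁻¹ :=
    funext fun g ↦ (character_inv_eq_star ρ g).symm
  have star_σ : (star fun g ↦ σ.character (conjInto H g)) =
      fun g ↦ σ.character (conjInto H g⁻¹) := funext fun g ↦ by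
    rw [hH.comp_conjInto_inv hσ, character_inv_eq_star]
    rfl
  have hsmul : ρ.character = (c : ℂ) • fun g ↦ σ.character (conjInto H g) := by
    apply eq_smul_of_dotProduct_star_eq (Nat.cast_nonneg (Nat.card G)) hc0
    · rw [star_ρ]
      exact_mod_cast sum_character_mul_character_inv ρ
    · rw [star_σ]
      have := hH.sum_comp_conjInto_mul_comp_conjInto_inv hσ
      rw [sum_character_mul_character_inv, ← hG] at this
      exact_mod_cast this
    · rw [star_σ]
      exact_mod_cast hc
  rw [hsmul]
  simp [conjInto_eq_one hg, conjInto_eq_one one_mem_frobeniusKernelSet]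

theorem isClassFunction_indicator_frobeniusKernelSet {k : Type*} [Zero k] [One k] :
    IsClassFunction ((frobeniusKernelSet H).indicator (1 : G → k)) := by
  classical
  intro a b hab
  have : a ∈ frobeniusKernelSet H ↔ b ∈ frobeniusKernelSet H :=
    ⟨mem_frobeniusKernelSet_of_isConj hab, mem_frobeniusKernelSet_of_isConj hab.symm⟩
  simp [Set.indicator_apply, this]

theorem IsMalnormal.formalSum_mul_self [Fintype G] (hH : IsMalnormal H) :
    formalSum ((frobeniusKernelSet H).indicator (1 : G → ℂ)) *
        formalSum ((frobeniusKernelSet H).indicator 1) =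
      (H.index : ℂ) • formalSum ((frobeniusKernelSet H).indicator 1) := by
  classical
  rw [← sub_eq_zero]
  refine groupAlgebra_eq_zero_of_forall_isIrreducible fun V _ _ _ ρ _ ↦ ?_
  have hsum : ∑ g, (frobeniusKernelSet H).indicator 1 g * ρ.character g =
      ∑ g with g ∈ frobeniusKernelSet H, ρ.character g := by
    simp [Set.indicator_apply, Finset.sum_filter]
  rw [map_sub, map_mul, map_smul,
    isClassFunction_indicator_frobeniusKernelSet.asAlgebraHom_formalSum ρ, hsum, ← map_mul,
    Algebra.smul_def, ← map_mul, ← map_sub]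
  by_cases hK : ∑ g with g ∈ frobeniusKernelSet H, ρ.character g = 0
  · simp [hK]
  · rw [hH.sum_frobeniusKernelSet_eq_index_mul fun g hg ↦
        hH.character_eq_character_one_of_sum_ne_zero ρ hK hg, char_one,
      mul_div_cancel_right₀ _ (finrank_ne_zero_of_isIrreducible ρ), sub_self, map_zero]

variable [Finite G]

/-- The Frobenius kernel of a malnormal subgroup of a finite group, as a subgroup. -/
def IsMalnormal.frobeniusKernel (hH : IsMalnormal H) : Subgroup G where
  carrier := frobeniusKernelSet H
  one_mem' := one_mem_frobeniusKernelSet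
  inv_mem' := inv_mem_frobeniusKernelSet
  mul_mem' ha hb :=
    have := Fintype.ofFinite G
    mul_mem_of_formalSum_mul_self hH.formalSum_mul_self ha hb

theorem IsMalnormal.normal_frobeniusKernel (hH : IsMalnormal H) : hH.frobeniusKernel.Normal :=
  ⟨fun _ hk g ↦ mem_frobeniusKernelSet_of_isConj (isConj_iff.mpr ⟨g, rfl⟩) hk⟩

theorem IsMalnormal.disjoint_frobeniusKernel (hH : IsMalnormal H) :
    Disjoint hH.frobeniusKernel H :=
  Subgroup.disjoint_def.mpr fun hK hx ↦ hK _ hx (IsConj.refl _)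

theorem IsMalnormal.frobeniusKernel_ne_bot (hH : IsMalnormal H) (hne : H ≠ ⊤) :
    hH.frobeniusKernel ≠ ⊥ := by
  intro hbot
  have hcard : Nat.card hH.frobeniusKernel = H.index := hH.card_frobeniusKernelSet
  rw [hbot, Subgroup.card_bot] at hcard
  exact hne (Subgroup.index_eq_one.mp hcard.symm)

end FrobeniusTheorem

section FixedPoints

variable {G α : Type*} [Group G] [MulAction G α]

theorem isMalnormal_stabilizer
    (hfix : ∀ g : G, g ≠ 1 → ∀ a b : α, g • a = a → g • b = b → a = b) (a : α) :
    IsMalnormal (MulAction.stabilizer G a) := by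
  intro g x hx hgx hx1
  have hxg : x • g⁻¹ • a = g⁻¹ • a := by
    rw [eq_inv_smul_iff, smul_smul, smul_smul]
    exact hgx
  exact eq_inv_smul_iff.mp (hfix x hx1 _ _ hx hxg)

theorem two_mul_index_le_card [Finite G] {H : Subgroup G} (hH : H ≠ ⊥) :
    2 * H.index ≤ Nat.card G := by
  rw [← H.card_mul_index]
  exact Nat.mul_le_mul_right _ (H.one_lt_card_iff_ne_bot.mpr hH)

-- The two Frobenius kernels share the identity and have at most `|G| / 2` elements each, so they
-- do not cover `G`.
theorem IsMalnormal.exists_isConj [Finite G] {A B : Subgroup G} (hA : IsMalnormal A)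
    (hB : IsMalnormal B) (hA' : A ≠ ⊥) (hB' : B ≠ ⊥) :
    ∃ a ∈ A, ∃ b ∈ B, a ≠ 1 ∧ IsConj a b := by
  have hcardA := two_mul_index_le_card hA'
  have hcardB := two_mul_index_le_card hB'
  rw [← hA.card_frobeniusKernelSet, Nat.card_coe_set_eq] at hcardA
  rw [← hB.card_frobeniusKernelSet, Nat.card_coe_set_eq] at hcardB
  have hinter : 0 < (frobeniusKernelSet A ∩ frobeniusKernelSet B).ncard :=
    (Set.ncard_pos (Set.toFinite _)).mpr ⟨1, one_mem_frobeniusKernelSet, one_mem_frobeniusKernelSet⟩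
  have hunion := Set.ncard_union_add_ncard_inter (frobeniusKernelSet A) (frobeniusKernelSet B)
  obtain ⟨g, hg⟩ : ∃ g, g ∉ frobeniusKernelSet A ∪ frobeniusKernelSet B := by
    by_contra! hcover
    rw [Set.eq_univ_of_forall hcover, Set.ncard_univ] at hunion
    lia
  simp only [frobeniusKernelSet, Set.mem_union, Set.mem_ofPred_eq, not_or, not_forall] at hg
  obtain ⟨⟨a, ha, hga, ha1⟩, b, hb, hgb, -⟩ := hg
  exact ⟨a, ha, b, hb, ha1, hga.symm.trans hgb⟩

theorem exists_forall_smul_eq_of_existsUnique [Finite G] [Nontrivial G]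
    (hfix : ∀ g : G, g ≠ 1 → ∃! a : α, g • a = a) : ∃ a : α, ∀ g : G, g • a = a := by
  by_contra! hmove
  have hmal (a : α) : IsMalnormal (MulAction.stabilizer G a) :=
    isMalnormal_stabilizer (fun g hg _ _ ↦ (hfix g hg).unique) a
  have hbot {g : G} {a : α} (hg : g ≠ 1) (ha : g • a = a) : MulAction.stabilizer G a ≠ ⊥ :=
    fun h ↦ hg ((Subgroup.eq_bot_iff_forall _).mp h g ha)
  obtain ⟨g, hg⟩ := exists_ne (1 : G)
  obtain ⟨a, ha, -⟩ := hfix g hg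
  obtain ⟨k, hk, hk1⟩ : ∃ k ∈ frobeniusKernelSet (MulAction.stabilizer G a), k ≠ 1 := by
    have hne : MulAction.stabilizer G a ≠ ⊤ := fun htop ↦ by
      obtain ⟨x, hx⟩ := hmove a
      exact hx (htop ▸ Subgroup.mem_top x : x ∈ MulAction.stabilizer G a)
    exact (Subgroup.bot_or_exists_ne_one _).resolve_left ((hmal a).frobeniusKernel_ne_bot hne)
  obtain ⟨b, hb, -⟩ := hfix k hk1
  obtain ⟨x, hx, y, hy, hx1, hxy⟩ := (hmal a).exists_isConj (hmal b) (hbot hg ha) (hbot hk1 hb)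
  obtain ⟨c, rfl⟩ := isConj_iff.mp hxy
  have hca : c • a = b := by
    refine (hfix _ (conj_eq_one_iff.not.mpr hx1)).unique ?_ hy
    rw [smul_smul, inv_mul_cancel_right, mul_smul, MulAction.mem_stabilizer_iff.mp hx]
  have hkc : c⁻¹ * k * c⁻¹⁻¹ ∈ MulAction.stabilizer G a := by
    rw [inv_inv, MulAction.mem_stabilizer_iff, mul_smul, hca, mul_smul, hb, ← hca, inv_smul_smul]
  exact hk1 (conj_eq_one_iff.mp (hk _ hkc (isConj_iff.mpr ⟨c⁻¹, rfl⟩)))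

theorem bijOn_inv_mul_conj {N : Subgroup G} [Finite N] {h : G} (hN : ∀ n ∈ N, h * n * h⁻¹ ∈ N)
    (hcomm : ∀ n ∈ N, Commute h n → n = 1) :
    Set.BijOn (fun n ↦ n⁻¹ * (h * n * h⁻¹)) N N := by
  have hmaps : Set.MapsTo (fun n ↦ n⁻¹ * (h * n * h⁻¹)) (N : Set G) N := fun n hn ↦
    N.mul_mem (N.inv_mem hn) (hN n hn)
  have hinj : Set.InjOn (fun n ↦ n⁻¹ * (h * n * h⁻¹)) (N : Set G) := by
    intro x hx y hy (hxy : x⁻¹ * (h * x * h⁻¹) = y⁻¹ * (h * y * h⁻¹))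
    refine (mul_inv_eq_one.mp (hcomm _ (N.mul_mem hy (N.inv_mem hx)) ?_)).symm
    calc h * (y * x⁻¹) = y * (y⁻¹ * (h * y * h⁻¹)) * h * x⁻¹ := by group
      _ = y * (x⁻¹ * (h * x * h⁻¹)) * h * x⁻¹ := by rw [hxy]
      _ = y * x⁻¹ * h := by group
  exact ((Set.toFinite _).injOn_iff_bijOn_of_mapsTo hmaps).mp hinj

theorem existsUnique_smul_eq [Nonempty α] {K : Subgroup G} [K.Normal] [Finite K]
    (htrans : ∀ a b : α, ∃ k ∈ K, k • a = b) {h : G} (hcomm : ∀ k ∈ K, Commute h k → k = 1) :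
    ∃! a : α, h • a = a := by
  have hconj : ∀ k ∈ K, h * k * h⁻¹ ∈ K := fun k hk ↦ ‹K.Normal›.conj_mem k hk h
  have hK := bijOn_inv_mul_conj hconj hcomm
  obtain ⟨a₀⟩ := ‹Nonempty α›
  obtain ⟨k₀, hk₀, hk₀a⟩ := htrans a₀ (h • a₀)
  obtain ⟨k, -, hkk₀⟩ := hK.surjOn (K.inv_mem hk₀)
  have ha : h • k • a₀ = k • a₀ := by
    have : h * k = k * k₀⁻¹ * h := by rw [← hkk₀]; group
    rw [smul_smul, this, mul_smul, ← hk₀a, smul_smul, inv_mul_cancel_right]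
  refine ⟨k • a₀, ha, fun b hb ↦ ?_⟩
  generalize k • a₀ = a at ha
  obtain ⟨n, hn, rfl⟩ := htrans a b
  have : Finite (K ⊓ MulAction.stabilizer G a : Subgroup G) :=
    Finite.Set.subset (K : Set G) inf_le_left
  have hN : Set.BijOn (fun x ↦ x⁻¹ * (h * x * h⁻¹)) (K ⊓ MulAction.stabilizer G a : Subgroup G)
      (K ⊓ MulAction.stabilizer G a : Subgroup G) := by
    refine bijOn_inv_mul_conj (fun x hx ↦ Subgroup.mem_inf.mpr ⟨hconj x hx.1, ?_⟩)
      fun x hx ↦ hcomm x hx.1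
    rw [MulAction.mem_stabilizer_iff, mul_smul, mul_smul, inv_smul_eq_iff.mpr ha.symm, hx.2, ha]
  have hn' : n⁻¹ * (h * n * h⁻¹) ∈ K ⊓ MulAction.stabilizer G a := by
    refine Subgroup.mem_inf.mpr ⟨hK.mapsTo hn, ?_⟩
    rw [MulAction.mem_stabilizer_iff, mul_smul, mul_smul, mul_smul,
      inv_smul_eq_iff.mpr ha.symm, hb, inv_smul_smul]
  obtain ⟨x, hx, hxn⟩ := hN.surjOn hn'
  rw [← hK.injOn hx.1 hn hxn, hx.2]

end FixedPoints

section Socle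

variable {G : Type*} [Group G] {H K L : Subgroup G}

open scoped Pointwise in
theorem mem_normalizer_map_subtype_of_conjNormal_smul_eq [K.Normal] {Q : Subgroup K} {g : G}
    (hg : (MulAut.conjNormal g : MulAut K) • Q = Q) :
    g ∈ Subgroup.normalizer (Q.map K.subtype : Set G) := by
  refine Subgroup.mem_normalizer_iff_map_conj_eq.mpr ?_
  conv_rhs => rw [← hg]
  rw [Subgroup.map_map]
  exact (Subgroup.map_map Q K.subtype (MulAut.conjNormal g : MulAut K).toMonoidHom).symm

-- Each nontrivial element of `H` normalises a unique Sylow subgroup of `K`.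
theorem exists_sylow_le_normalizer [K.Normal] [Finite K] [Finite H] (hH : H ≠ ⊥) (p : ℕ)
    [Fact p.Prime] (hcomm : ∀ h ∈ H, h ≠ 1 → ∀ k ∈ K, Commute h k → k = 1) :
    ∃ P : Sylow p K, H ≤ Subgroup.normalizer ((P : Subgroup K).map K.subtype : Set G) := by
  have htrans (P Q : Sylow p K) : ∃ k ∈ K, (MulAut.conjNormal k : MulAut K) • P = Q := by
    obtain ⟨k, rfl⟩ := MulAction.exists_smul_eq K P Q
    exact ⟨k, k.2, by rw [MulAut.conjNormal_val, Sylow.smul_def]⟩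
  let _ : MulAction G (Sylow p K) :=
    MulAction.compHom (Sylow p K) (MulAut.conjNormal : G →* MulAut K)
  have := (Subgroup.nontrivial_iff_ne_bot H).mpr hH
  obtain ⟨P, hP⟩ := exists_forall_smul_eq_of_existsUnique (G := H) (α := Sylow p K) fun h hh ↦
    existsUnique_smul_eq htrans (hcomm h h.2 (OneMemClass.coe_eq_one.not.mpr hh))
  exact ⟨P, fun h hh ↦ mem_normalizer_map_subtype_of_conjNormal_smul_eq
    congr(($(hP ⟨h, hh⟩) : Subgroup K))⟩

theorem normal_of_le_normalizer_of_isCoatom (hH : IsCoatom H) (hdisj : Disjoint L H) (hL : L ≠ ⊥)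
    (hle : H ≤ Subgroup.normalizer (L : Set G)) : L.Normal := by
  refine Subgroup.normalizer_eq_top_iff.mp (hH.2 _ (lt_of_le_of_ne hle fun heq ↦ hL ?_))
  exact hdisj.eq_bot_of_le (heq ▸ Subgroup.le_normalizer)

theorem isMinimalNormal_of_disjoint_of_isCoatom [K.Normal] (hH : IsCoatom H) (hdisj : Disjoint K H)
    (hK : K ≠ ⊥) : IsMinimalNormal K := by
  refine ⟨‹_›, hK, fun L hL hLK ↦ or_iff_not_imp_left.mpr fun hbot ↦ le_antisymm hLK fun k hk ↦ ?_⟩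
  have hLH : ¬L ≤ H := fun hLH ↦ hbot ((hdisj.mono_left hLK).eq_bot_of_le hLH)
  have htop : H ⊔ L = ⊤ := hH.2 _ (left_lt_sup.mpr hLH)
  obtain ⟨h, hh, l, hl, rfl⟩ := Subgroup.mem_sup_of_normal_right.mp (htop ▸ Subgroup.mem_top k)
  have : h = 1 := Subgroup.disjoint_def.mp hdisj ((K.mul_mem_cancel_right (hLK hl)).mp hk) hh
  rwa [this, one_mul]

theorem IsMinimalNormal.commute_of_isPGroup [Finite K] (hK : IsMinimalNormal K) {p : ℕ}
    [Fact p.Prime] (hp : IsPGroup p K) {x y : G} (hx : x ∈ K) (hy : y ∈ K) : Commute x y := by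
  have := hK.1
  have := (Subgroup.nontrivial_iff_ne_bot K).mpr hK.2.1
  have hcenter : (Subgroup.center K).map K.subtype = K := by
    refine (hK.2.2 _ inferInstance (Subgroup.map_subtype_le _)).resolve_left ?_
    rw [Subgroup.map_eq_bot_iff_of_injective _ K.subtype_injective]
    exact (Subgroup.nontrivial_iff_ne_bot _).mp hp.center_nontrivial
  obtain ⟨z, hz, rfl⟩ := hcenter.symm ▸ hx
  exact congr(($(Subgroup.mem_center_iff.mp hz ⟨y, hy⟩) : G)).symm

theorem socle_le_of_centralizer_le [K.Normal] (hK : Subgroup.centralizer (K : Set G) ≤ K) :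
    socle G ≤ K := by
  refine iSup₂_le fun M hM ↦ ?_
  have := hM.1
  rcases hM.2.2 (M ⊓ K) inferInstance inf_le_left with hbot | hinf
  · refine le_trans (fun m hm ↦ Subgroup.mem_centralizer_iff.mpr fun k hk ↦ ?_) hK
    exact Subgroup.commute_of_normal_of_disjoint K M ‹_› hM.1
      (disjoint_iff.mpr hbot).symm k m hk hm
  · exact inf_eq_left.mp hinf

variable [Finite G]

theorem IsMalnormal.eq_one_of_commute (hH : IsMalnormal H) {h k : G} (hh : h ∈ H) (h1 : h ≠ 1)
    (hk : k ∈ hH.frobeniusKernel) (hcomm : Commute h k) : k = 1 := by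
  refine Subgroup.disjoint_def.mp hH.disjoint_frobeniusKernel hk (hH hh ?_ h1)
  rwa [← hcomm.eq, mul_inv_cancel_right]

theorem IsMalnormal.centralizer_frobeniusKernel_le (hH : IsMalnormal H) (hne : H ≠ ⊤) :
    Subgroup.centralizer (hH.frobeniusKernel : Set G) ≤ hH.frobeniusKernel := by
  have := hH.normal_frobeniusKernel
  intro x hx h hh hxh
  by_contra h1
  refine hH.frobeniusKernel_ne_bot hne ((Subgroup.eq_bot_iff_forall _).mpr fun k hk ↦ ?_)
  obtain ⟨c, rfl⟩ := isConj_iff.mp hxh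
  have hcentral : c * x * c⁻¹ ∈ Subgroup.centralizer (hH.frobeniusKernel : Set G) :=
    Subgroup.Normal.conj_mem inferInstance x hx c
  exact hH.eq_one_of_commute hh h1 hk (Subgroup.mem_centralizer_iff.mp hcentral k hk).symm

theorem IsMalnormal.exists_isPGroup_frobeniusKernel (hH : IsMalnormal H) (hcoatom : IsCoatom H)
    (hbot : H ≠ ⊥) : ∃ p, p.Prime ∧ IsPGroup p hH.frobeniusKernel := by
  have := hH.normal_frobeniusKernel
  have hne := hH.frobeniusKernel_ne_bot hcoatom.1
  obtain ⟨p, hp, hdvd⟩ := Nat.exists_prime_and_dvd (mt Subgroup.card_eq_one.mp hne)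
  have := Fact.mk hp
  obtain ⟨P, hP⟩ := exists_sylow_le_normalizer hbot p fun h hh h1 k hk ↦
    hH.eq_one_of_commute hh h1 hk
  have hle : (P : Subgroup hH.frobeniusKernel).map hH.frobeniusKernel.subtype ≤ _ :=
    Subgroup.map_subtype_le _
  have hPbot : (P : Subgroup hH.frobeniusKernel).map hH.frobeniusKernel.subtype ≠ ⊥ := by
    rw [Ne, Subgroup.map_eq_bot_iff_of_injective _ hH.frobeniusKernel.subtype_injective]
    exact P.ne_bot_of_dvd_card hdvd
  have hnormal := normal_of_le_normalizer_of_isCoatom hcoatom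
    (hH.disjoint_frobeniusKernel.mono_left hle) hPbot hP
  have hmin := isMinimalNormal_of_disjoint_of_isCoatom hcoatom hH.disjoint_frobeniusKernel hne
  have htop := (hmin.2.2 _ hnormal hle).resolve_left hPbot
  exact ⟨p, hp, htop ▸ P.isPGroup'.map _⟩

theorem IsMalnormal.commute_of_mem_socle (hH : IsMalnormal H) (hcoatom : IsCoatom H)
    (hbot : H ≠ ⊥) {x y : G} (hx : x ∈ socle G) (hy : y ∈ socle G) : Commute x y := by
  have := hH.normal_frobeniusKernel
  have hsocle := socle_le_of_centralizer_le (hH.centralizer_frobeniusKernel_le hcoatom.1)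
  obtain ⟨p, hp, hpgroup⟩ := hH.exists_isPGroup_frobeniusKernel hcoatom hbot
  have := Fact.mk hp
  exact (isMinimalNormal_of_disjoint_of_isCoatom hcoatom hH.disjoint_frobeniusKernel
    (hH.frobeniusKernel_ne_bot hcoatom.1)).commute_of_isPGroup hpgroup (hsocle hx) (hsocle hy)

end Socle

section IrredundantTuples

variable {G Ω : Type*} [Group G] [MulAction G Ω] {l : List Ω} {x y : Ω}

theorem mem_listStabilizer {g : G} : g ∈ listStabilizer G l ↔ ∀ ω ∈ l, g • ω = ω := by
  simp [listStabilizer, Subgroup.mem_iInf]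

theorem listStabilizer_append (l₁ l₂ : List Ω) :
    listStabilizer G (l₁ ++ l₂) = listStabilizer G l₁ ⊓ listStabilizer G l₂ := by
  ext g
  simp only [Subgroup.mem_inf, mem_listStabilizer, List.forall_mem_append]

theorem listStabilizer_singleton (x : Ω) :
    listStabilizer G [x] = MulAction.stabilizer G x := by
  simp [listStabilizer]

theorem IsIrredundantTuple.append_singleton (hl : IsIrredundantTuple G l)
    (hx : ¬listStabilizer G l ≤ MulAction.stabilizer G x) : IsIrredundantTuple G (l ++ [x]) := by
  rintro ⟨i, hi⟩
  rcases (Nat.lt_succ_iff_lt_or_eq (n := l.length)).mp (by simpa using hi) with hlt | rfl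
  · obtain ⟨g, hg, hgi⟩ := hl ⟨i, hlt⟩
    refine ⟨g, ?_, ?_⟩
    · simpa [List.take_append_of_le_length hlt.le] using hg
    · simpa [List.getElem_append_left hlt] using hgi
  · obtain ⟨g, hg, hgx⟩ := SetLike.not_le_iff_exists.mp hx
    exact ⟨g, by simpa using hg, by simpa using hgx⟩

theorem isIrredundantTuple_pair (hx : MulAction.stabilizer G x ≠ ⊤)
    (hxy : ¬MulAction.stabilizer G x ≤ MulAction.stabilizer G y) :
    IsIrredundantTuple G [x, y] := by
  have hnil : IsIrredundantTuple G ([] : List Ω) := fun i ↦ i.elim0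
  have hsingle : IsIrredundantTuple G [x] :=
    hnil.append_singleton (by simpa [listStabilizer] using hx)
  exact hsingle.append_singleton (by rwa [listStabilizer_singleton])

theorem IsIrredundantTuple.exists_isBaseTuple_append [Finite G] [FaithfulSMul G Ω]
    (hl : IsIrredundantTuple G l) :
    ∃ l', IsBaseTuple G (l ++ l') ∧ IsIrredundantTuple G (l ++ l') := by
  induction hs : listStabilizer G l using WellFoundedLT.induction generalizing l with
  | ind s ih =>
  subst hs
  by_cases hbase : IsBaseTuple G l
  · exact ⟨[], by simpa using hbase, by simpa using hl⟩
  obtain ⟨g, hg, hg1⟩ := (Subgroup.bot_or_exists_ne_one _).resolve_left hbase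
  obtain ⟨x, hx⟩ : ∃ x : Ω, g • x ≠ x := by
    by_contra! hfix
    exact hg1 (FaithfulSMul.eq_of_smul_eq_smul fun x : Ω ↦ by rw [hfix, one_smul])
  have hle : ¬listStabilizer G l ≤ MulAction.stabilizer G x := fun hle ↦ hx (hle hg)
  have hlt : listStabilizer G (l ++ [x]) < listStabilizer G l := by
    rw [listStabilizer_append, listStabilizer_singleton]
    exact inf_lt_left.mpr hle
  obtain ⟨l', hbase', hirr⟩ := ih _ hlt (hl.append_singleton hle) rfl
  exact ⟨x :: l', by simpa using hbase', by simpa using hirr⟩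

theorem IsIBIS.isBaseTuple [Finite G] [FaithfulSMul G Ω] (hG : IsIBIS G Ω) {l₁ l₂ : List Ω}
    (hbase : IsBaseTuple G l₁) (hirr₁ : IsIrredundantTuple G l₁) (hirr₂ : IsIrredundantTuple G l₂)
    (hlen : l₁.length = l₂.length) : IsBaseTuple G l₂ := by
  obtain ⟨l', hbase', hirr'⟩ := hirr₂.exists_isBaseTuple_append
  have hlength := hG _ _ hbase hirr₁ hbase' hirr'
  rw [List.length_append, hlen, left_eq_add, List.length_eq_zero_iff] at hlength
  rwa [hlength, List.append_nil] at hbase'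

theorem baseSize_le_length (hl : IsBaseTuple G l) : baseSize G Ω ≤ l.length :=
  Nat.sInf_le ⟨l, rfl, hl⟩

theorem exists_isBaseTuple_length_eq_baseSize (h : baseSize G Ω ≠ 0) :
    ∃ l : List Ω, l.length = baseSize G Ω ∧ IsBaseTuple G l :=
  Nat.sInf_mem (Nat.nonempty_of_sInf_eq_succ (Nat.succ_pred h).symm)

theorem stabilizer_ne_bot_of_one_lt_baseSize (h : 1 < baseSize G Ω) (x : Ω) :
    MulAction.stabilizer G x ≠ ⊥ := fun hx ↦
  h.not_ge (baseSize_le_length (l := [x]) ((listStabilizer_singleton x).trans hx))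

theorem exists_isIrredundantTuple_pair_of_baseSize_eq_two (h : baseSize G Ω = 2) :
    ∃ x y : Ω, IsBaseTuple G [x, y] ∧ IsIrredundantTuple G [x, y] := by
  obtain ⟨l, hlen, hl⟩ := exists_isBaseTuple_length_eq_baseSize (G := G) (Ω := Ω) (by lia)
  obtain ⟨x, y, rfl⟩ := List.length_eq_two.mp (hlen.trans h)
  have hinf : MulAction.stabilizer G x ⊓ MulAction.stabilizer G y = ⊥ := by
    rw [← listStabilizer_singleton x, ← listStabilizer_singleton y, ← listStabilizer_append]
    exact hl
  have hbot := stabilizer_ne_bot_of_one_lt_baseSize (G := G) (Ω := Ω) (by lia)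
  refine ⟨x, y, hl, isIrredundantTuple_pair (fun hx ↦ hbot y ?_) fun hxy ↦ hbot x ?_⟩
  · rwa [hx, top_inf_eq] at hinf
  · rwa [inf_eq_left.mpr hxy] at hinf

end IrredundantTuples

section Primitive

variable {G Ω : Type*} [Group G] [MulAction G Ω]

theorem IsPrimitiveAction.isPreprimitive (h : IsPrimitiveAction G Ω) :
    MulAction.IsPreprimitive G Ω :=
  have := h.1
  { isTrivialBlock_of_isBlock := fun {B} hB ↦ h.2 B hB }

theorem stabilizer_eq_bot_of_normal [MulAction.IsPretransitive G Ω] [FaithfulSMul G Ω] {x : Ω}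
    (hx : (MulAction.stabilizer G x).Normal) : MulAction.stabilizer G x = ⊥ := by
  refine (Subgroup.eq_bot_iff_forall _).mpr fun g hg ↦
    FaithfulSMul.eq_of_smul_eq_smul (α := Ω) fun y ↦ ?_
  obtain ⟨t, rfl⟩ := MulAction.exists_smul_eq G x y
  have : (t⁻¹ * g * t⁻¹⁻¹) • x = x := hx.conj_mem g hg t⁻¹
  rw [inv_inv, mul_smul, mul_smul, inv_smul_eq_iff] at this
  rw [this, one_smul]

theorem eq_of_stabilizer_le_stabilizer [MulAction.IsPreprimitive G Ω] [FaithfulSMul G Ω]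
    {x y : Ω} (hbot : MulAction.stabilizer G x ≠ ⊥)
    (hle : MulAction.stabilizer G x ≤ MulAction.stabilizer G y) : x = y := by
  by_contra hne
  have : Nontrivial Ω := ⟨x, y, hne⟩
  have hcoatom (z : Ω) : IsCoatom (MulAction.stabilizer G z) :=
    MulAction.IsPreprimitive.isCoatom_stabilizer_of_isPreprimitive G z
  have heq := (((hcoatom x).le_iff).mp hle).resolve_left (hcoatom y).1
  obtain ⟨t, ht⟩ := MulAction.exists_smul_eq G x y
  have htn : t ∈ Subgroup.normalizer (MulAction.stabilizer G x : Set G) := by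
    refine Subgroup.mem_normalizer_iff_map_conj_eq.mpr ?_
    exact (MulAction.stabilizer_smul_eq_stabilizer_map_conj t x).symm.trans (ht.symm ▸ heq)
  have hlt : MulAction.stabilizer G x < Subgroup.normalizer (MulAction.stabilizer G x : Set G) := by
    refine lt_of_le_of_ne Subgroup.le_normalizer fun h ↦ hne ?_
    have htx : t ∈ MulAction.stabilizer G x := h ▸ htn
    exact htx.symm.trans ht
  exact hbot (stabilizer_eq_bot_of_normal
    (Subgroup.normalizer_eq_top_iff.mp ((hcoatom x).2 _ hlt)))

theorem IsIBIS.eq_of_smul_eq [Finite G] [MulAction.IsPreprimitive G Ω] [FaithfulSMul G Ω]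
    (hG : IsIBIS G Ω) (hb : baseSize G Ω = 2) {g : G} (hg : g ≠ 1) {x y : Ω}
    (hx : g • x = x) (hy : g • y = y) : x = y := by
  by_contra hne
  obtain ⟨a, b, hbase, hirr⟩ := exists_isIrredundantTuple_pair_of_baseSize_eq_two hb
  have : Nontrivial Ω := ⟨x, y, hne⟩
  have hirr' : IsIrredundantTuple G [x, y] := by
    refine isIrredundantTuple_pair
      (MulAction.IsPreprimitive.isCoatom_stabilizer_of_isPreprimitive G x).1 fun hle ↦ hne ?_
    exact eq_of_stabilizer_le_stabilizer (stabilizer_ne_bot_of_one_lt_baseSize (by lia) x) hle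
  have hbase' := hG.isBaseTuple hbase hirr hirr' rfl
  exact hg ((Subgroup.eq_bot_iff_forall _).mp hbase' g (mem_listStabilizer.mpr (by simp [hx, hy])))

end Primitive

/-- A finite primitive group with non-abelian socle and base size 2 is not IBIS. -/
theorem not_isIBIS_of_baseSize_two {G Ω : Type*} [Group G] [Finite G] [MulAction G Ω]
    [Finite Ω] [FaithfulSMul G Ω] (hprim : IsPrimitiveAction G Ω)
    (hb : baseSize G Ω = 2)
    (hsoc : ¬ ∀ x ∈ socle G, ∀ y ∈ socle G, x * y = y * x) :
    ¬ IsIBIS G Ω := by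
  intro hIBIS
  have := hprim.isPreprimitive
  obtain ⟨a, b, -, hirr⟩ := exists_isIrredundantTuple_pair_of_baseSize_eq_two hb
  have : Nontrivial Ω := by
    obtain ⟨g, -, hg⟩ := hirr 0
    exact ⟨_, _, hg⟩
  have hmal : IsMalnormal (MulAction.stabilizer G a) :=
    isMalnormal_stabilizer (fun g hg x y ↦ hIBIS.eq_of_smul_eq hb hg) a
  have hcoatom : IsCoatom (MulAction.stabilizer G a) :=
    MulAction.IsPreprimitive.isCoatom_stabilizer_of_isPreprimitive G a
  have hbot : MulAction.stabilizer G a ≠ ⊥ := stabilizer_ne_bot_of_one_lt_baseSize (by lia) a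
  exact hsoc fun x hx y hy ↦ hmal.commute_of_mem_socle hcoatom hbot hx hy
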